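/- arXiv:2009.09221 — 4 statements merged into one kernel-verified Lean document; each statement's English description precedes it below -/
import Mathlib

section
/- Let G be a countably infinite, locally finite, strongly connected directed graph. For every nonempty subset W ⊆ V(G), the complement of the sheltered hull of W is the union of all horoballs of the reversed graph Ḡ that are disjoint from W: V(G) \ S_G(W) = ⋃ { H : H is a horoball in Ḡ, H ∩ W = ∅ }. -/
/-!
The operator `φ_G` is adjoint to that of the reversed graph: `φ_G^r(A)` meets `B` exactly when `A`
meets `φ_Ḡ^r(B)` (`phiG_iterate_inter_nonempty`). In particular `u ∈ φ_G^r(W)` means that the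
`r`-ball of `Ḡ` around `u` meets `W` (`mem_phiG_iterate`).

If `v` is outside the sheltered hull, then for every `r ≥ 1` some `c_r` lies in `φ_G^r({v})` but not
in `φ_G^r(W)`, so the `r`-ball of `Ḡ` around `c_r` contains `v` and misses `W`. A subsequence of these
balls converges by compactness of `{0,1}^V` (`exists_convergent_subseq`), and the limit is a horoball
containing `v` and disjoint from `W`.

Conversely, if `φ_G^r({v}) ⊆ φ_G^r(W)`, then by local finiteness `W` may be replaced by a finite
`F ⊆ W`, and the inclusion persists for all larger radii. So every large ball of `Ḡ` containing `v`
meets the fixed finite set `F`. A horoball through `v` disjoint from `W` would be a limit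
of balls that eventually contain `v` and, `F` being finite, eventually miss `F`: a contradiction.
-/

open Filter Set

/-- The map `φ_G` on subsets of the vertex set of a directed graph with edge
relation `E`: `φ_G(W) = W ∪ {v : ∃ w ∈ W, (w,v) ∈ E}`. -/
def phiG {V : Type*} (E : V → V → Prop) (W : Set V) : Set V :=
  W ∪ {v | ∃ w ∈ W, E w v}

/-- A directed graph is locally finite if every vertex has finitely many
out-neighbors and finitely many in-neighbors. -/
def LocallyFiniteGraph {V : Type*} (E : V → V → Prop) : Prop :=
  ∀ v : V, {w | E v w}.Finite ∧ {w | E w v}.Finite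

/-- A directed graph is strongly connected if every vertex is reachable from
every other vertex by a directed path. -/
def StronglyConnectedGraph {V : Type*} (E : V → V → Prop) : Prop :=
  ∀ v w : V, ∃ n : ℕ, w ∈ (phiG E)^[n] {v}

/-- Convergence of a sequence of subsets in the product topology on
`{0,1}^V`: for every vertex, membership eventually agrees with the limit. -/
def ConvergesTo {V : Type*} (s : ℕ → Set V) (S : Set V) : Prop :=
  ∀ v : V, ∀ᶠ i in atTop, (v ∈ s i ↔ v ∈ S)

/-- A horoball: a nonempty proper subset of `V` which is a limit of balls
`φ_G^{n_i}({c_i})` with radii `n_i → ∞`. -/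
def IsHoroball {V : Type*} (E : V → V → Prop) (H : Set V) : Prop :=
  H.Nonempty ∧ H ≠ univ ∧
    ∃ (c : ℕ → V) (n : ℕ → ℕ), Tendsto n atTop atTop ∧
      ConvergesTo (fun i => (phiG E)^[n i] {c i}) H

/-- A geodesic ray: a sequence `γ` of vertices such that for `i > j` the
shortest directed path from `γ i` to `γ j` has length exactly `i - j`. -/
def IsGeodesicRay {V : Type*} (E : V → V → Prop) (γ : ℕ → V) : Prop :=
  ∀ i j : ℕ, j < i →
    γ j ∈ (phiG E)^[i - j] {γ i} ∧ ∀ n : ℕ, γ j ∈ (phiG E)^[n] {γ i} → i - j ≤ n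

/-- A Busemann ball: a set of the form `⋃ r, φ_G^r({γ r})` for a geodesic ray
`γ`, which is neither empty nor the whole vertex set. -/
def IsBusemannBall {V : Type*} (E : V → V → Prop) (B : Set V) : Prop :=
  B ≠ ∅ ∧ B ≠ univ ∧
    ∃ γ : ℕ → V, IsGeodesicRay E γ ∧ B = ⋃ r : ℕ, (phiG E)^[r] {γ r}


/-- The `r`-sheltered hull of `W`. -/
def shelR {V : Type*} (E : V → V → Prop) (r : ℕ) (W : Set V) : Set V :=
  {v | (phiG E)^[r] {v} ⊆ (phiG E)^[r] W}

/-- The sheltered hull of `W`: the union of the `r`-sheltered hulls over `r ≥ 1`. -/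
def shelHull {V : Type*} (E : V → V → Prop) (W : Set V) : Set V :=
  ⋃ r ∈ {r : ℕ | 1 ≤ r}, shelR E r W

theorem phiG_inter_nonempty {V : Type*} (E : V → V → Prop) (A B : Set V) :
    (phiG E A ∩ B).Nonempty ↔ (A ∩ phiG (flip E) B).Nonempty := by
  constructor
  · rintro ⟨u, hA | ⟨w, hw, h⟩, hB⟩
    · exact ⟨u, hA, Or.inl hB⟩
    · exact ⟨w, hw, Or.inr ⟨u, hB, h⟩⟩
  · rintro ⟨u, hA, hB | ⟨w, hw, h⟩⟩
    · exact ⟨u, Or.inl hA, hB⟩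
    · exact ⟨w, Or.inr ⟨u, hA, h⟩, hw⟩

theorem phiG_iterate_inter_nonempty {V : Type*} (E : V → V → Prop) (r : ℕ) (A B : Set V) :
    ((phiG E)^[r] A ∩ B).Nonempty ↔ (A ∩ (phiG (flip E))^[r] B).Nonempty := by
  induction r generalizing A with
  | zero => rfl
  | succ r ih =>
    rw [Function.iterate_succ_apply, Function.iterate_succ_apply', ih, phiG_inter_nonempty]

/-- Membership in `φ_G^r(W)` in terms of balls of the reversed graph. -/
theorem mem_phiG_iterate {V : Type*} (E : V → V → Prop) (r : ℕ) (W : Set V) (u : V) :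
    u ∈ (phiG E)^[r] W ↔ ∃ w ∈ W, w ∈ (phiG (flip E))^[r] {u} := by
  rw [← inter_singleton_nonempty, phiG_iterate_inter_nonempty]
  rfl

theorem mem_phiG_iterate_singleton {V : Type*} (E : V → V → Prop) (r : ℕ) (u v : V) :
    u ∈ (phiG E)^[r] {v} ↔ v ∈ (phiG (flip E))^[r] {u} := by
  simp [mem_phiG_iterate E r {v} u]

theorem phiG_mono {V : Type*} (E : V → V → Prop) : Monotone (phiG E) := by
  rintro A B h u (hu | ⟨w, hw, hE⟩)
  · exact Or.inl (h hu)
  · exact Or.inr ⟨w, h hw, hE⟩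

theorem phiG_iterate_finite {V : Type*} {E : V → V → Prop} (hLF : LocallyFiniteGraph E) (r : ℕ)
    {A : Set V} (hA : A.Finite) : ((phiG E)^[r] A).Finite := by
  induction r with
  | zero => exact hA
  | succ r ih =>
    rw [Function.iterate_succ_apply']
    refine ih.union ((ih.biUnion fun w _ => (hLF w).1).subset ?_)
    rintro v ⟨w, hw, h⟩
    exact mem_biUnion hw h

/-- Sequential compactness of `{0,1}^V` for countable `V`. -/
theorem exists_convergent_subseq {V : Type*} [Countable V] (s : ℕ → Set V) :
    ∃ (H : Set V) (k : ℕ → ℕ), StrictMono k ∧ ConvergesTo (fun i => s (k i)) H := by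
  classical
  obtain ⟨f, k, hk, hlim⟩ :=
    CompactSpace.tendsto_subseq (fun i => (fun v => decide (v ∈ s i) : V → Bool))
  refine ⟨{v | f v = true}, k, hk, fun v => ?_⟩
  have h := tendsto_pi_nhds.1 hlim v
  rw [nhds_discrete, tendsto_pure] at h
  filter_upwards [h] with i hi
  simp [← hi]

/-- The sheltering of `v` by `W` is realized by a finite subset of `W`, uniformly in all large radii. -/
theorem exists_finite_shelter {V : Type*} {E : V → V → Prop} (hLF : LocallyFiniteGraph E)
    {r : ℕ} {W : Set V} {v : V} (hv : v ∈ shelR E r W) :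
    ∃ F ⊆ W, F.Finite ∧ ∀ n, r ≤ n → (phiG E)^[n] {v} ⊆ (phiG E)^[n] F := by
  have hfin : ((phiG E)^[r] {v}).Finite := phiG_iterate_finite hLF r (finite_singleton v)
  have hch : ∀ u ∈ (phiG E)^[r] {v}, ∃ w ∈ W, w ∈ (phiG (flip E))^[r] {u} :=
    fun u hu => (mem_phiG_iterate E r W u).1 (hv hu)
  choose! g hgW hg using hch
  refine ⟨g '' (phiG E)^[r] {v}, image_subset_iff.2 hgW, hfin.image g, fun n hn => ?_⟩
  obtain ⟨m, rfl⟩ := Nat.exists_eq_add_of_le' hn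
  rw [Function.iterate_add_apply, Function.iterate_add_apply]
  refine (phiG_mono E).iterate m fun u hu => ?_
  exact (mem_phiG_iterate E r _ u).2 ⟨g u, mem_image_of_mem g hu, hg u hu⟩

/-- The complement of the sheltered hull of a nonempty set `W` is the union of
all horoballs of the reversed graph that are disjoint from `W`. -/
theorem compl_shelHull_eq_union_horoballs {V : Type*} [Countable V] [Infinite V]
    (E : V → V → Prop) (hLF : LocallyFiniteGraph E)
    (hSC : StronglyConnectedGraph E) (W : Set V) (hW : W.Nonempty) :
    univ \ shelHull E W =
      ⋃₀ {H : Set V | IsHoroball (flip E) H ∧ H ∩ W = ∅} := by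
  ext v
  simp only [Set.mem_sdiff, mem_univ, true_and, mem_sUnion, mem_ofPred_eq]
  constructor
  · intro hv
    have hc : ∀ i : ℕ, ∃ c, c ∈ (phiG E)^[i + 1] {v} ∧ c ∉ (phiG E)^[i + 1] W := by
      intro i
      by_contra! h
      exact hv (mem_biUnion (x := i + 1) (Nat.le_add_left 1 i) h)
    choose c hcv hcW using hc
    obtain ⟨H, k, hk, hH⟩ :=
      exists_convergent_subseq (fun i => (phiG (flip E))^[i + 1] {c i})
    have hvH : v ∈ H := by
      obtain ⟨i, hi⟩ := (hH v).exists
      exact hi.1 ((mem_phiG_iterate_singleton E _ _ _).1 (hcv (k i)))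
    have hWH : ∀ w ∈ W, w ∉ H := by
      intro w hw hwH
      obtain ⟨i, hi⟩ := (hH w).exists
      exact hcW (k i) ((mem_phiG_iterate E _ _ _).2 ⟨w, hw, hi.2 hwH⟩)
    refine ⟨H, ⟨⟨⟨v, hvH⟩, ?_, fun i => c (k i), fun i => k i + 1, ?_, hH⟩, ?_⟩, hvH⟩
    · rintro rfl
      obtain ⟨w, hw⟩ := hW
      exact hWH w hw (mem_univ w)
    · exact (tendsto_add_atTop_nat 1).comp hk.tendsto_atTop
    · exact eq_empty_of_forall_notMem fun w hw => hWH w hw.2 hw.1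
  · rintro ⟨H, ⟨⟨-, -, c, n, hn, hH⟩, hHW⟩, hvH⟩ hv
    obtain ⟨r, -, hr⟩ := mem_iUnion₂.1 hv
    obtain ⟨F, hFW, hF, hsub⟩ := exists_finite_shelter hLF hr
    have hFev : ∀ᶠ i in atTop, ∀ w ∈ F, (w ∈ (phiG (flip E))^[n i] {c i} ↔ w ∈ H) :=
      (eventually_all_finite hF).2 fun w _ => hH w
    obtain ⟨i, hvi, hFi, hni⟩ := ((hH v).and (hFev.and (hn.eventually_ge_atTop r))).exists
    have hci := hsub (n i) hni ((mem_phiG_iterate_singleton E _ _ _).2 (hvi.2 hvH))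
    obtain ⟨w, hwF, hw⟩ := (mem_phiG_iterate E _ _ _).1 hci
    exact notMem_empty w (hHW ▸ ⟨(hFi w hwF).1 hw, hFW hwF⟩)
end

section
/- Let G be a countably infinite, locally finite, strongly connected directed graph. Then Fin(φ_G) is exactly the collection of finite subsets of V(G), i.e. a set M ⊆ V(G) satisfies (for all r,n ∈ ℕ the set {N ⊆ V(G) : φ_G^r(N) = φ_G^{r+n}(M)} is finite) if and only if M is finite. -/
/-!
If `M` is finite, any `N` with `φ^r(N) = φ^{r+n}(M)` is a subset of the finite set `φ^{r+n}(M)`,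
so there are finitely many such `N`.

If `M` is infinite, already `r = 1`, `n = 2` gives infinitely many `N`. Let `A` be the set of
vertices `y` that have an in-neighbor `x ≠ y` in `M`. Every vertex of `M` has an out-neighbor
different from itself, and in-degrees are finite, so `A` is infinite. For `y ∈ A`, the set
`N = φ²(M) \ {y}` satisfies `φ(N) = φ³(M)`: the vertex `y` is recovered from its in-neighbor in
`M`, and the out-neighbors of `y` other than `y` already lie in `φ²(M)`, hence in `N`.
-/

open Filter Set

theorem subset_phiG {V : Type*} (E : V → V → Prop) (W : Set V) : W ⊆ phiG E W :=
  subset_union_left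

theorem subset_phiG_iterate {V : Type*} (E : V → V → Prop) (r : ℕ) (W : Set V) :
    W ⊆ (phiG E)^[r] W := by
  induction r with
  | zero => exact subset_rfl
  | succ r ih =>
    rw [Function.iterate_succ_apply']
    exact ih.trans (subset_phiG E _)

theorem finite_phiG_iterate {V : Type*} {E : V → V → Prop} (hLF : LocallyFiniteGraph E)
    (r : ℕ) {W : Set V} (hW : W.Finite) : ((phiG E)^[r] W).Finite := by
  induction r with
  | zero => exact hW
  | succ r ih =>
    rw [Function.iterate_succ_apply']
    refine ih.union ((ih.biUnion fun w _ => (hLF w).1).subset ?_)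
    rintro v ⟨w, hw, hwv⟩
    exact mem_biUnion hw hwv

theorem exists_out_neighbor_ne {V : Type*} [Infinite V] {E : V → V → Prop}
    (hSC : StronglyConnectedGraph E) (x : V) : ∃ y, y ≠ x ∧ E x y := by
  by_contra! h
  have hfix : phiG E {x} = {x} := by
    ext v
    simp only [phiG, mem_union, mem_singleton_iff, mem_ofPred_eq, exists_eq_left]
    exact ⟨fun hv => hv.elim id fun hv => by_contra fun hne => h v hne hv, Or.inl⟩
  obtain ⟨w, hw⟩ := exists_ne x
  obtain ⟨n, hn⟩ := hSC x w
  rw [Function.iterate_fixed hfix] at hn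
  exact hw hn

/-- Since in-degrees are finite, finitely many vertices cannot serve as the out-neighbors of
infinitely many. -/
theorem infinite_out_neighbors {V : Type*} [Infinite V] {E : V → V → Prop}
    (hLF : LocallyFiniteGraph E) (hSC : StronglyConnectedGraph E) {M : Set V}
    (hM : M.Infinite) : {y | ∃ x ∈ M, y ≠ x ∧ E x y}.Infinite := by
  intro hA
  refine hM ((hA.biUnion fun y _ => (hLF y).2).subset fun x hx => ?_)
  obtain ⟨y, hne, hxy⟩ := exists_out_neighbor_ne hSC x
  exact mem_biUnion (show y ∈ {y | ∃ x ∈ M, y ≠ x ∧ E x y} from ⟨x, hx, hne, hxy⟩) hxy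

/-- Deleting from `φ²(M)` a vertex that has a different in-neighbor in `M` does not change the
image under `φ`. -/
theorem phiG_diff_singleton {V : Type*} {E : V → V → Prop} {M : Set V} {x y : V}
    (hx : x ∈ M) (hne : y ≠ x) (hxy : E x y) :
    phiG E (phiG E (phiG E M) \ {y}) = phiG E (phiG E (phiG E M)) := by
  have hxK : x ∈ phiG E (phiG E M) \ {y} :=
    ⟨subset_phiG E _ (subset_phiG E _ hx), fun h => hne h.symm⟩
  have hy : y ∈ phiG E (phiG E (phiG E M) \ {y}) := Or.inr ⟨x, hxK, hxy⟩
  apply Subset.antisymm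
  · rintro v (hv | ⟨w, hw, hwv⟩)
    · exact Or.inl hv.1
    · exact Or.inr ⟨w, hw.1, hwv⟩
  · intro v hv
    by_cases hvy : v = y
    · exact hvy ▸ hy
    rcases hv with hv | ⟨w, hw, hwv⟩
    · exact Or.inl ⟨hv, hvy⟩
    · by_cases hwy : w = y
      · subst hwy
        exact Or.inl ⟨Or.inr ⟨w, Or.inr ⟨x, hx, hxy⟩, hwv⟩, hvy⟩
      · exact Or.inr ⟨w, ⟨hw, hwy⟩, hwv⟩

/-- `Fin(φ_G)` is exactly the collection of finite subsets of the vertex set: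
`M` satisfies "for all `r, n`, the set of `N` with `φ_G^r(N) = φ_G^{r+n}(M)` is
finite" if and only if `M` is finite. -/
theorem fin_phiG_iff_finite {V : Type*} [Countable V] [Infinite V]
    (E : V → V → Prop) (hLF : LocallyFiniteGraph E)
    (hSC : StronglyConnectedGraph E) (M : Set V) :
    (∀ r n : ℕ,
        {N : Set V | (phiG E)^[r] N = (phiG E)^[r + n] M}.Finite) ↔
      M.Finite := by
  constructor
  · intro h
    by_contra hM
    have hA := infinite_out_neighbors hLF hSC hM
    have hinj : InjOn (fun y => phiG E (phiG E M) \ {y}) {y | ∃ x ∈ M, y ≠ x ∧ E x y} := by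
      rintro y ⟨x, hx, -, hxy⟩ z - hyz
      by_contra hne
      have hyK : y ∈ phiG E (phiG E M) \ {z} :=
        ⟨subset_phiG E _ (Or.inr ⟨x, hx, hxy⟩), hne⟩
      have hyK' : y ∈ phiG E (phiG E M) \ {y} := hyz.ge hyK
      exact hyK'.2 rfl
    refine hA.image hinj ((h 1 2).subset ?_)
    rintro _ ⟨y, ⟨x, hx, hne, hxy⟩, rfl⟩
    exact phiG_diff_singleton hx hne hxy
  · intro hM r n
    refine (finite_phiG_iterate hLF (r + n) hM).finite_subsets.subset fun N hN => ?_
    exact (subset_phiG_iterate E r N).trans (le_of_eq hN)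
end

section
/- Let (Γ,A) be a finitely generated group and let q ∈ ℕ satisfy A^{-1} ⊆ A^q. Then Γ is amenable if and only if there exists a sequence (M_n)_{n∈ℕ} of nonempty finite subsets of Γ such that lim_{n→∞} L_A^q(φ_A^{(q+5)q}(M_n)) / L_A^q(φ_A^{(q+1)q}(M_n)) = 1. -/
/-!
Put `B = A ^ q` and write `L W` for the logarithm of the number of `N` with `N B = W B`. With
`W = M A ^ ((q + 1) q)` the two quantities compared are `L W` and `L (W B⁴)`.

*Amenable implies ratio tending to one.* For finite `W ⊆ W'` the numbers `L W` and `L W'` differ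
by at most a constant times the size of the `B B⁻¹`-boundary of `W` plus `|W' B \ W|`: adding
`W' \ W`, respectively intersecting with `W` and adding the points of `W` near its boundary, turns
solutions for one set into solutions for the other (`logb_coverFam_le_of_subset`,
`logb_coverFam_le_of_superset`). For a Følner sequence this error is `o(|M|)`, whereas `L W` is at
least `|M| / |B B⁻¹|`, because `M B B⁻¹ ⊆ W` and the points of a subset of `M` with disjoint
translates `e B` may be deleted from `W` independently (`ncard_le_logb_coverFam`).

*Ratio tending to one implies amenable.* A solution `N` for `W` is contained in `W B`; adding the
shell `W B⁴ \ W B` gives a solution for `W B⁴`, from which any subset of a separated set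
`E ⊆ W B A² \ W B A` may still be removed (`shell_le`). So `L (W B⁴) - L W` bounds
`|W B A² \ W B A|` up to a constant, and `L W ≤ |W B|`. Hence the sets `W B A` are asymptotically
invariant under `A`, and positive generation makes them a Følner sequence.
-/

open Filter Set
open scoped Pointwise

/-- A finite subset `A` of a group positively generates it if every element is
a product of `n ≥ 1` elements of `A`. -/
def PosGen {Γ : Type*} [Group Γ] (A : Set Γ) : Prop :=
  ∀ g : Γ, ∃ n : ℕ, 1 ≤ n ∧ g ∈ A ^ n

/-- The word length `|g|_A = min {n : g ∈ A^n}` (with `A^0 = {1}`). -/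
noncomputable def wlen {Γ : Type*} [Group Γ] (A : Set Γ) (g : Γ) : ℕ :=
  sInf {n : ℕ | g ∈ A ^ n}

/-- `g` is a dead end of depth at least `n` for `(Γ, A)` if `g A^n ⊆ A^{|g|_A}`. -/
def IsDeadEndDepth {Γ : Type*} [Group Γ] (A : Set Γ) (g : Γ) (n : ℕ) : Prop :=
  {g} * A ^ n ⊆ A ^ wlen A g

/-- The `r`-sheltered hull of `W` with respect to `A`:
`S_A^r(W) = {v : v A^r ⊆ W A^r}`. -/
def shelRA {Γ : Type*} [Group Γ] (A : Set Γ) (r : ℕ) (W : Set Γ) : Set Γ :=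
  {v | {v} * A ^ r ⊆ W * A ^ r}

/-- The sheltered hull `S_A(W) = ⋃_{r ≥ 1} S_A^r(W)`. -/
def shelHullA {Γ : Type*} [Group Γ] (A : Set Γ) (W : Set Γ) : Set Γ :=
  ⋃ r ∈ {r : ℕ | 1 ≤ r}, shelRA A r W

/-- The Minkowski product map `φ_A(W) = W A`. -/
def phiA {Γ : Type*} [Group Γ] (A : Set Γ) (W : Set Γ) : Set Γ := W * A

/-- `L_A^k(M) = log₂ |{N ⊆ Γ : N A^k = M A^k}|`. -/
noncomputable def LA {Γ : Type*} [Group Γ] (A : Set Γ) (k : ℕ) (M : Set Γ) : ℝ :=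
  Real.logb 2 ({N : Set Γ | N * A ^ k = M * A ^ k}.ncard)

/-- A right Følner sequence: nonempty finite sets `F n` with
`|F n · g \ F n| / |F n| → 0` for every `g`. -/
def IsRightFolnerSeq {Γ : Type*} [Group Γ] (F : ℕ → Set Γ) : Prop :=
  (∀ n, (F n).Finite ∧ (F n).Nonempty) ∧
    ∀ g : Γ, Tendsto
      (fun n => ((((· * g) '' F n) \ F n).ncard : ℝ) / ((F n).ncard : ℝ))
      atTop (nhds 0)

/-- A group is amenable if it admits a right Følner sequence. -/
def AmenableGroup (Γ : Type*) [Group Γ] : Prop :=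
  ∃ F : ℕ → Set Γ, IsRightFolnerSeq F

/-! ### Counting the solutions of `N B = W B` -/

/-- The family of all sets `N` with `N B = W B`. -/
def coverFam {G : Type*} [Group G] (B W : Set G) : Set (Set G) := {N | N * B = W * B}

section
variable {G : Type*} [Group G]

lemma coverFam_subset {B W N : Set G} (h1 : (1 : G) ∈ B) (hN : N ∈ coverFam B W) :
    N ⊆ W * B := by
  have h : N * B = W * B := hN
  rw [← h]
  exact Set.subset_mul_left N h1

lemma coverFam_finite {B W : Set G} (h1 : (1 : G) ∈ B) (hB : B.Finite) (hW : W.Finite) :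
    (coverFam B W).Finite :=
  (hW.mul hB).finite_subsets.subset fun _ hN => coverFam_subset h1 hN

lemma coverFam_ncard_pos {B W : Set G} (h1 : (1 : G) ∈ B) (hB : B.Finite) (hW : W.Finite) :
    0 < (coverFam B W).ncard :=
  (Set.ncard_pos (coverFam_finite h1 hB hW)).2 ⟨W, rfl⟩

lemma logb_ncard_prod_powerset {α : Type*} {T : Set (Set α)} {Y : Set α}
    (hT : 0 < T.ncard) (hY : Y.Finite) :
    Real.logb 2 ((T ×ˢ 𝒫 Y).ncard) = Real.logb 2 T.ncard + Y.ncard := by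
  have hc : (𝒫 Y).ncard = 2 ^ Y.ncard := Set.ncard_powerset Y hY
  rw [Set.ncard_prod, hc]
  push_cast
  rw [Real.logb_mul (by positivity) (by positivity), Real.logb_pow]
  simp

/-- A map whose fibres are told apart by the trace on `Y` loses at most `|Y|` bits. -/
lemma logb_ncard_le_add {α : Type*} {S T : Set (Set α)} {Y : Set α} (f : Set α → Set α)
    (hS : 0 < S.ncard) (hT : 0 < T.ncard) (hY : Y.Finite) (hf : ∀ N ∈ S, f N ∈ T)
    (hinj : ∀ N ∈ S, ∀ N' ∈ S, f N = f N' → N ∩ Y = N' ∩ Y → N = N') :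
    Real.logb 2 S.ncard ≤ Real.logb 2 T.ncard + Y.ncard := by
  rw [← logb_ncard_prod_powerset hT hY]
  have hfin : (T ×ˢ 𝒫 Y).Finite := (Set.finite_of_ncard_pos hT).prod hY.finite_subsets
  refine Real.logb_le_logb_of_le (by norm_num) (by exact_mod_cast hS) ?_
  rw [Nat.cast_le]
  exact Set.ncard_le_ncard_of_injOn (fun N => (f N, N ∩ Y))
    (fun N hN => ⟨hf N hN, Set.inter_subset_right⟩)
    (fun N hN N' hN' h => hinj N hN N' hN' (Prod.ext_iff.1 h).1 (Prod.ext_iff.1 h).2) hfin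

/-- A family that receives an injection from `T × 𝒫 E` has at least `|E|` bits more than `T`. -/
lemma add_le_logb_ncard {α : Type*} {S T : Set (Set α)} {E : Set α} (f : Set α → Set α → Set α)
    (hS : S.Finite) (hT : 0 < T.ncard) (hE : E.Finite)
    (hf : ∀ N ∈ T, ∀ D ⊆ E, f N D ∈ S)
    (hinj : ∀ N ∈ T, ∀ D ⊆ E, ∀ N' ∈ T, ∀ D' ⊆ E, f N D = f N' D' → N = N' ∧ D = D') :
    Real.logb 2 T.ncard + E.ncard ≤ Real.logb 2 S.ncard := by
  rw [← logb_ncard_prod_powerset hT hE]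
  have hfin : (T ×ˢ 𝒫 E).Finite := (Set.finite_of_ncard_pos hT).prod hE.finite_subsets
  have hpos : 0 < (T ×ˢ 𝒫 E).ncard := by
    obtain ⟨N, hN⟩ := Set.nonempty_of_ncard_ne_zero hT.ne'
    exact (Set.ncard_pos hfin).2 ⟨(N, ∅), hN, Set.empty_subset _⟩
  refine Real.logb_le_logb_of_le (by norm_num) (by exact_mod_cast hpos) ?_
  rw [Nat.cast_le]
  exact Set.ncard_le_ncard_of_injOn (fun p => f p.1 p.2)
    (fun p hp => hf _ hp.1 _ hp.2)
    (fun p hp p' hp' h => Prod.ext_iff.2 (hinj _ hp.1 _ hp.2 _ hp'.1 _ hp'.2 h)) hS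

lemma logb_coverFam_le {B W : Set G} (h1 : (1 : G) ∈ B) (hB : B.Finite) (hW : W.Finite) :
    Real.logb 2 (coverFam B W).ncard ≤ (W * B).ncard := by
  have h := logb_ncard_le_add (S := coverFam B W) (T := {(∅ : Set G)}) (Y := W * B)
    (fun _ => ∅) (coverFam_ncard_pos h1 hB hW) (by simp) (hW.mul hB) (by simp)
    (fun N hN N' hN' _ h => by
      rwa [Set.inter_eq_left.2 (coverFam_subset h1 hN),
        Set.inter_eq_left.2 (coverFam_subset h1 hN')] at h)
  simpa using h

lemma ncard_mul_le_mul_ncard (X Y : Set G) : (X * Y).ncard ≤ X.ncard * Y.ncard := by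
  simpa [Nat.card_coe_set_eq] using Set.natCard_mul_le (s := X) (t := Y)

/-! ### Separated sets and the lower bound -/

/-- A maximal subset `E` of `X` with pairwise disjoint translates `e B`; maximality gives
`X ⊆ E B B⁻¹`, hence the cardinality bound. -/
lemma exists_separated {B X : Set G} (h1 : (1 : G) ∈ B) (hB : B.Finite) (hX : X.Finite) :
    ∃ E ⊆ X, (∀ e ∈ E, ∀ f ∈ E, ∀ b ∈ B, ∀ c ∈ B, e * b = f * c → e = f) ∧
      X.ncard ≤ E.ncard * (B * B⁻¹).ncard := by
  let P : Set (Set G) := {E | E ⊆ X ∧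
    ∀ e ∈ E, ∀ f ∈ E, ∀ b ∈ B, ∀ c ∈ B, e * b = f * c → e = f}
  have hP : P.Finite := hX.finite_subsets.subset fun E hE => hE.1
  obtain ⟨E, hE⟩ := hP.exists_maximal ⟨∅, by simp [P]⟩
  have hEX : E ⊆ X := hE.prop.1
  refine ⟨E, hEX, hE.prop.2, ?_⟩
  have hsub : X ⊆ E * (B * B⁻¹) := by
    intro x hx
    by_contra hxE
    have key : ∀ e ∈ E, ∀ b ∈ B, ∀ c ∈ B, x * b ≠ e * c := by
      intro e he b hb c hc h
      apply hxE
      refine ⟨e, he, c * b⁻¹, ⟨c, hc, b⁻¹, by simpa using hb, rfl⟩, ?_⟩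
      change e * (c * b⁻¹) = x
      rw [← mul_assoc, ← h, mul_inv_cancel_right]
    have hins : insert x E ∈ P := by
      refine ⟨Set.insert_subset hx hEX, ?_⟩
      rintro e (rfl | he) f (rfl | hf) b hb c hc h
      · rfl
      · exact absurd h (key f hf b hb c hc)
      · exact absurd h.symm (key e he c hc b hb)
      · exact hE.prop.2 e he f hf b hb c hc h
    have hxin : x ∈ E := hE.le_of_ge hins (Set.subset_insert x E) (Set.mem_insert x E)
    exact key x hxin 1 h1 1 h1 rfl
  calc X.ncard ≤ (E * (B * B⁻¹)).ncard :=
        Set.ncard_le_ncard hsub ((hX.subset hEX).mul (hB.mul hB.inv))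
    _ ≤ _ := ncard_mul_le_mul_ncard _ _

/-- If `M B B⁻¹ ⊆ W`, the points of a separated subset of `M` may be deleted from `W` freely,
so the family of `W` has at least `|M| / |B B⁻¹|` bits. -/
lemma ncard_le_logb_coverFam {B M W : Set G} (h1 : (1 : G) ∈ B) (hB : B.Finite)
    (hM : M.Finite) (hW : W.Finite) (hMW : M * (B * B⁻¹) ⊆ W) (hne : ∃ b ∈ B, b ≠ 1) :
    (M.ncard : ℝ) ≤ Real.logb 2 (coverFam B W).ncard * (B * B⁻¹).ncard := by
  obtain ⟨E, hEM, hsep, hcard⟩ := exists_separated h1 hB hM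
  have hmem : ∀ e ∈ E, ∀ b ∈ B, ∀ c ∈ B, e * b * c⁻¹ ∈ W := fun e he b hb c hc =>
    hMW ⟨e, hEM he, b * c⁻¹, ⟨b, hb, c⁻¹, by simpa using hc, rfl⟩, by simp [mul_assoc]⟩
  have hEW : E ⊆ W := fun e he => by simpa using hmem e he 1 h1 1 h1
  have h := add_le_logb_ncard (S := coverFam B W) (T := {(∅ : Set G)}) (E := E)
    (fun _ D => W \ D) (coverFam_finite h1 hB hW) (by simp) (hM.subset hEM) (by
      intro _ _ D hD
      apply Set.Subset.antisymm (Set.mul_subset_mul_right Set.sdiff_subset)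
      rintro _ ⟨w, hw, b, hb, rfl⟩
      by_cases hwD : w ∈ D
      · have hwE := hD hwD
        -- a second point `w b c⁻¹` with `c ≠ b` covers `w b`
        obtain ⟨c, hc, hcb⟩ : ∃ c ∈ B, c ≠ b := by
          by_cases hb1 : b = 1
          · simpa [hb1] using hne
          · exact ⟨1, h1, fun h => hb1 h.symm⟩
        refine ⟨w * b * c⁻¹, ⟨hmem w hwE b hb c hc, fun hD' => hcb ?_⟩, c, hc, by simp⟩
        have := hsep _ hwE _ (hD hD') b hb c hc (by simp)
        rw [mul_assoc, left_eq_mul, mul_inv_eq_one] at this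
        exact this.symm
      · exact ⟨w, ⟨hw, hwD⟩, b, hb, rfl⟩) (by
      intro N hN D hD N' hN' D' hD' h
      refine ⟨by simp_all, ?_⟩
      rw [← Set.sdiff_sdiff_cancel_left (hD.trans hEW), h,
        Set.sdiff_sdiff_cancel_left (hD'.trans hEW)])
  have h' : (E.ncard : ℝ) ≤ Real.logb 2 (coverFam B W).ncard := by simpa using h
  calc (M.ncard : ℝ) ≤ E.ncard * (B * B⁻¹).ncard := by exact_mod_cast hcard
    _ ≤ _ := by gcongr

/-! ### Comparing nested sets -/

lemma logb_coverFam_le_of_subset {B W W' : Set G} (h1 : (1 : G) ∈ B) (hB : B.Finite)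
    (hW' : W'.Finite) (hWW : W ⊆ W') :
    Real.logb 2 (coverFam B W).ncard ≤ Real.logb 2 (coverFam B W').ncard + (W' \ W).ncard := by
  refine logb_ncard_le_add (fun N => N ∪ (W' \ W))
    (coverFam_ncard_pos h1 hB (hW'.subset hWW)) (coverFam_ncard_pos h1 hB hW')
    (hW'.subset Set.sdiff_subset) ?_ ?_
  · intro N hN
    have hN : N * B = W * B := hN
    change (N ∪ (W' \ W)) * B = W' * B
    rw [Set.union_mul, hN, ← Set.union_mul, Set.union_sdiff_cancel hWW]
  · intro N _ N' _ h h2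
    ext x
    have e1 := Set.ext_iff.1 h x
    have e2 := Set.ext_iff.1 h2 x
    simp only [Set.mem_union, Set.mem_inter_iff] at e1 e2
    tauto

/-- A set covering `W' B` restricts to one covering `W B` once the points of `W` near the
boundary of `W` are added to it. -/
lemma logb_coverFam_le_of_superset {B W W' : Set G} (h1 : (1 : G) ∈ B) (hB : B.Finite)
    (hW' : W'.Finite) (hWW : W ⊆ W') :
    Real.logb 2 (coverFam B W').ncard ≤ Real.logb 2 (coverFam B W).ncard +
      (((W * (B * B⁻¹)) \ W).ncard * (B * B⁻¹).ncard + ((W' * B) \ W).ncard) := by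
  set K := B * B⁻¹ with hK
  have hKf : K.Finite := hB.mul hB.inv
  have hWf := hW'.subset hWW
  let D : Set G := {w ∈ W | ∃ k ∈ K, w * k ∉ W}
  have hDsub : D ⊆ ((W * K) \ W) * K⁻¹ := by
    rintro w ⟨hw, k, hk, hwk⟩
    exact ⟨w * k, ⟨⟨w, hw, k, hk, rfl⟩, hwk⟩, k⁻¹, by simpa using hk, by simp⟩
  have hDW : D ⊆ W := fun w hw => hw.1
  have hD : D.ncard ≤ ((W * K) \ W).ncard * K.ncard := by
    refine (Set.ncard_le_ncard hDsub
      (((hWf.mul hKf).subset Set.sdiff_subset).mul hKf.inv)).trans ?_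
    refine (ncard_mul_le_mul_ncard _ _).trans_eq ?_
    rw [Set.ncard_inv]
  have hY : (D ∪ (W' * B) \ W).Finite :=
    (hWf.subset hDW).union ((hW'.mul hB).subset Set.sdiff_subset)
  have h := logb_ncard_le_add (S := coverFam B W') (T := coverFam B W)
    (Y := D ∪ (W' * B) \ W) (fun N => N ∩ W ∪ D)
    (coverFam_ncard_pos h1 hB hW') (coverFam_ncard_pos h1 hB hWf) hY (by
      intro N hN
      have hN : N * B = W' * B := hN
      apply Set.Subset.antisymm
        (Set.mul_subset_mul_right (Set.union_subset Set.inter_subset_right hDW))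
      rintro _ ⟨w, hw, b, hb, rfl⟩
      by_cases hwD : w ∈ D
      · exact ⟨w, Or.inr hwD, b, hb, rfl⟩
      · have hx : w * b ∈ N * B := hN ▸ ⟨w, hWW hw, b, hb, rfl⟩
        obtain ⟨n, hn, c, hc, hnc⟩ := hx
        refine ⟨n, Or.inl ⟨hn, ?_⟩, c, hc, hnc⟩
        by_contra hnW
        refine hwD ⟨hw, b * c⁻¹, ⟨b, hb, c⁻¹, by simpa using hc, rfl⟩, ?_⟩
        rwa [← mul_assoc, ← show n * c = w * b from hnc, mul_inv_cancel_right]) (by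
      intro N hN N' hN' h h2
      ext x
      have e1 := Set.ext_iff.1 h x
      have e2 := Set.ext_iff.1 h2 x
      have e3 := @coverFam_subset _ _ _ _ _ h1 hN x
      have e4 := @coverFam_subset _ _ _ _ _ h1 hN' x
      simp only [Set.mem_union, Set.mem_inter_iff, Set.mem_sdiff] at e1 e2
      tauto)
  have h3 : ((D ∪ (W' * B) \ W).ncard : ℝ) ≤
      ((W * K) \ W).ncard * K.ncard + ((W' * B) \ W).ncard := by
    have := (Set.ncard_union_le D ((W' * B) \ W)).trans (Nat.add_le_add_right hD _)
    exact_mod_cast this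
  linarith

/-! ### The gain from the shell -/

/-- Passing from `W` to `W B⁴` gains a number of bits proportional to the shell
`W B A² \ W B A`: a solution `N` for `W` lies inside `W B`, the shell `W B⁴ \ W B` extends it to
a solution for `W B⁴`, and the points of a separated subset `E` of `W B A² \ W B A` remain
deletable. -/
lemma shell_le {A B W : Set G} (h1 : (1 : G) ∈ A) (hAB : A ⊆ B) (hAi : A⁻¹ ⊆ B)
    (hB : B.Finite) (hW : W.Finite) (hne : ∃ a ∈ A, a ≠ 1) :
    (((W * B * A * A) \ (W * B * A)).ncard : ℝ) ≤
      (Real.logb 2 (coverFam B (W * B * B * B * B)).ncard - Real.logb 2 (coverFam B W).ncard) *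
        (B * B⁻¹).ncard := by
  have hA := hB.subset hAB
  have h1B := hAB h1
  obtain ⟨E, hEX, hsep, hcard⟩ := exists_separated (X := (W * B * A * A) \ (W * B * A)) h1B hB
    ((((hW.mul hB).mul hA).mul hA).subset Set.sdiff_subset)
  set W' := W * B * B * B * B with hW'
  have hW'f : W'.Finite := (((hW.mul hB).mul hB).mul hB).mul hB
  let R := W' \ (W * B)
  have hEfin : E.Finite := ((((hW.mul hB).mul hA).mul hA).subset Set.sdiff_subset).subset hEX
  have hE3 : ∀ e ∈ E, e ∈ W * B * B * B := fun e he =>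
    Set.mul_subset_mul (Set.mul_subset_mul_left hAB) hAB (hEX he).1
  have hE4 : ∀ e ∈ E, ∀ b ∈ B, e * b ∈ W' := fun e he b hb => ⟨e, hE3 e he, b, hb, rfl⟩
  have hWBA : W * B ⊆ W * B * A := Set.subset_mul_left _ h1
  have hEn : ∀ e ∈ E, e ∉ W * B := fun e he h => (hEX he).2 (hWBA h)
  have hER : E ⊆ R := fun e he => ⟨by simpa using hE4 e he 1 h1B, hEn e he⟩
  have hWW' : W * B ⊆ W' := by
    refine (Set.subset_mul_left _ h1B).trans ((Set.subset_mul_left _ h1B).trans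
      (Set.subset_mul_left _ h1B))
  -- every point of `R` keeps being covered after deleting a subset of `E`
  have hself : ∀ D ⊆ E, ∀ x ∈ R, x ∈ (R \ D) * B := by
    intro D hD x hx
    by_cases hxD : x ∈ D
    · have hxE := hD hxD
      obtain ⟨a, ha, hane⟩ := hne
      have hai : a⁻¹ ∈ B := hAi (by simpa using ha)
      refine ⟨x * a⁻¹, ⟨⟨hE4 x hxE _ hai, fun h => (hEX hxE).2 ?_⟩, fun h => hane ?_⟩,
        a, hAB ha, by simp⟩
      · exact ⟨x * a⁻¹, h, a, ha, by simp⟩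
      · have := hsep _ hxE _ (hD h) 1 h1B a (hAB ha) (by simp)
        simpa using this
    · exact ⟨x, ⟨hx, hxD⟩, 1, h1B, by simp⟩
  have h := add_le_logb_ncard (S := coverFam B W') (T := coverFam B W) (E := E)
    (fun N D => N ∪ (R \ D)) (coverFam_finite h1B hB hW'f) (coverFam_ncard_pos h1B hB hW)
    hEfin (by
      intro N hN D hD
      have hNsub := coverFam_subset h1B hN
      have hN : N * B = W * B := hN
      apply Set.Subset.antisymm (Set.mul_subset_mul_right
        (Set.union_subset (hNsub.trans hWW') (Set.sdiff_subset.trans Set.sdiff_subset)))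
      rw [Set.union_mul, hN]
      rintro _ ⟨y, hy, b, hb, rfl⟩
      change y * b ∈ _
      by_cases hx : y * b ∈ W * B
      · exact Or.inl hx
      right
      by_cases hx' : y * b ∈ W'
      · exact hself D hD _ ⟨hx', hx⟩
      have hyD : y ∉ D := fun h => hx' (hE4 y (hD h) b hb)
      refine ⟨y, ⟨⟨hy, fun h => hx' ?_⟩, hyD⟩, b, hb, rfl⟩
      have : y * b ∈ W * B * B := ⟨y, h, b, hb, rfl⟩
      exact (Set.subset_mul_left _ h1B).trans (Set.subset_mul_left _ h1B) this) (by
      intro N hN D hD N' hN' D' hD' h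
      have e3 := coverFam_subset h1B hN
      have e4 := coverFam_subset h1B hN'
      constructor
      · ext x
        have e1 := Set.ext_iff.1 h x
        have := @e3 x
        have := @e4 x
        simp only [R, Set.mem_union, Set.mem_sdiff] at e1
        tauto
      · ext x
        have e1 := Set.ext_iff.1 h x
        have := @e3 x
        have := @e4 x
        have i1 := @hD x
        have i2 := @hD' x
        have i3 := @hER x
        simp only [R, Set.mem_union, Set.mem_sdiff] at e1 i3
        tauto)
  calc (((W * B * A * A) \ (W * B * A)).ncard : ℝ) ≤ E.ncard * (B * B⁻¹).ncard := by
        exact_mod_cast hcard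
    _ ≤ _ := by
        gcongr
        linarith

/-! ### Iterated products and Følner sequences -/

lemma phiA_iterate (A M : Set G) (k : ℕ) : (phiA A)^[k] M = M * A ^ k := by
  induction k with
  | zero => simp
  | succ k ih => rw [Function.iterate_succ_apply', ih, phiA, pow_succ, mul_assoc]

lemma ncard_mul_diff_le_sum {F K : Set G} (hF : F.Finite) (hK : K.Finite) :
    ((F * K) \ F).ncard ≤ ∑ g ∈ hK.toFinset, ((· * g) '' F \ F).ncard := by
  have hsub : (F * K) \ F ⊆ ⋃ g ∈ hK.toFinset, ((· * g) '' F \ F) := by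
    rintro _ ⟨⟨f, hf, k, hk, rfl⟩, hn⟩
    simp only [Set.mem_iUnion]
    exact ⟨k, by simpa using hk, ⟨f, hf, rfl⟩, hn⟩
  refine (Set.ncard_le_ncard hsub ?_).trans (Finset.set_ncard_biUnion_le _ _)
  exact Set.Finite.biUnion (Finset.finite_toSet _)
    fun g _ => (hF.image _).subset Set.sdiff_subset

lemma ncard_diff_mul_le {F : Set G} (hF : F.Finite) (g h : G) :
    ((· * (g * h)) '' F \ F).ncard ≤
      ((· * g) '' F \ F).ncard + ((· * h) '' F \ F).ncard := by
  have hsub : (· * (g * h)) '' F \ F ⊆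
      (· * h) '' ((· * g) '' F \ F) ∪ ((· * h) '' F \ F) := by
    rintro _ ⟨⟨f, hf, rfl⟩, hn⟩
    by_cases hg : f * g ∈ F
    · exact Or.inr ⟨⟨f * g, hg, by simp [mul_assoc]⟩, hn⟩
    · exact Or.inl ⟨f * g, ⟨⟨f, hf, rfl⟩, hg⟩, by simp [mul_assoc]⟩
  have f1 : ((· * g) '' F \ F).Finite := (hF.image _).subset Set.sdiff_subset
  have f2 : ((· * h) '' F \ F).Finite := (hF.image _).subset Set.sdiff_subset
  refine (Set.ncard_le_ncard hsub ((f1.image _).union f2)).trans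
    ((Set.ncard_union_le _ _).trans ?_)
  exact Nat.add_le_add_right (Set.ncard_image_le f1) _

/-- Almost invariance under a positively generating set implies the Følner property. -/
lemma isRightFolnerSeq_of_mul {A : Set G} (hA : A.Finite) (hgen : PosGen A) {F : ℕ → Set G}
    (hF : ∀ n, (F n).Finite ∧ (F n).Nonempty)
    (hlim : Tendsto (fun n => (((F n * A) \ F n).ncard : ℝ) / (F n).ncard) atTop (nhds 0)) :
    IsRightFolnerSeq F := by
  refine ⟨hF, ?_⟩
  have key : ∀ k : ℕ, ∀ g ∈ A ^ k, Tendsto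
      (fun n => ((((· * g) '' F n) \ F n).ncard : ℝ) / ((F n).ncard : ℝ)) atTop (nhds 0) := by
    intro k
    induction k with
    | zero =>
      intro g hg
      obtain rfl : g = 1 := by simpa using hg
      simp
    | succ k ih =>
      rintro _ ⟨g, hg, a, ha, rfl⟩
      have hs := (ih g hg).add hlim
      rw [add_zero] at hs
      refine squeeze_zero (fun n => by positivity) (fun n => ?_) hs
      rw [← add_div]
      gcongr
      have h1 := ncard_diff_mul_le (hF n).1 g a
      have h2 : ((· * a) '' F n \ F n).ncard ≤ ((F n * A) \ F n).ncard := by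
        refine Set.ncard_le_ncard (Set.sdiff_subset_sdiff_left ?_)
          (((hF n).1.mul hA).subset Set.sdiff_subset)
        rintro _ ⟨f, hf, rfl⟩
        exact ⟨f, hf, a, ha, rfl⟩
      exact_mod_cast h1.trans (Nat.add_le_add_left h2 _)
  intro g
  obtain ⟨k, -, hg⟩ := hgen g
  exact key k g hg

end

/-- `Γ` is amenable iff there is a sequence of nonempty finite sets `M n` with
`L_A^q(φ_A^{(q+5)q}(M n)) / L_A^q(φ_A^{(q+1)q}(M n)) → 1`. -/
theorem amenable_iff_LA_ratio_tendsto_one {Γ : Type*} [Group Γ] [Countable Γ]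
    [Infinite Γ]
    (A : Set Γ) (hfin : A.Finite) (hone : (1 : Γ) ∈ A) (hgen : PosGen A)
    (q : ℕ) (hq : A⁻¹ ⊆ A ^ q) :
    AmenableGroup Γ ↔
      ∃ M : ℕ → Set Γ, (∀ n, (M n).Finite ∧ (M n).Nonempty) ∧
        Tendsto
          (fun n =>
            LA A q ((phiA A)^[(q + 5) * q] (M n)) /
              LA A q ((phiA A)^[(q + 1) * q] (M n)))
          atTop (nhds 1) := by
  have hmono : ∀ {m n : ℕ}, m ≤ n → A ^ m ⊆ A ^ n := fun h => Set.pow_right_monotone hone h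
  have hpf : ∀ n, (A ^ n).Finite := by
    intro n
    induction n with
    | zero => simp
    | succ n ih => exact pow_succ A n ▸ ih.mul hfin
  -- as `Γ` is infinite, `A ≠ {1}` and hence `q ≠ 0`
  obtain ⟨a, haA, hane⟩ : ∃ a ∈ A, a ≠ 1 := by
    by_contra! h
    obtain ⟨g, hg⟩ := exists_ne (1 : Γ)
    obtain ⟨n, -, hn⟩ := hgen g
    have hA1 : A = 1 := Set.Subset.antisymm (fun x hx => h x hx) (by simpa using hone)
    rw [hA1, one_pow] at hn
    exact hg hn
  have hq1 : 1 ≤ q := by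
    rw [Nat.one_le_iff_ne_zero]
    rintro rfl
    have : a⁻¹ ∈ A ^ 0 := hq (by simpa using haA)
    exact hane (by simpa using this)
  set B := A ^ q with hBdef
  have hB : B.Finite := hpf q
  have hAB : A ⊆ B := by simpa using hmono hq1
  have h1B : (1 : Γ) ∈ B := hAB hone
  have hBi : B⁻¹ ⊆ A ^ (q * q) := by
    rw [hBdef, ← inv_pow, pow_mul]
    exact Set.pow_subset_pow_left hq
  have hKsub : B * B⁻¹ ⊆ A ^ (q + q * q) := by
    rw [pow_add]
    exact Set.mul_subset_mul_left hBi
  have hKpos : 0 < ((B * B⁻¹).ncard : ℝ) := by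
    have : 0 < (B * B⁻¹).ncard :=
      (Set.ncard_pos (hB.mul hB.inv)).2 ⟨1, 1, h1B, 1, by simpa using h1B, by simp⟩
    exact_mod_cast this
  have hLA : ∀ W : Set Γ, LA A q W = Real.logb 2 (coverFam B W).ncard := fun _ => rfl
  have hlow : ∀ M : Set Γ, M.Finite → (M.ncard : ℝ) ≤
      Real.logb 2 (coverFam B (M * A ^ ((q + 1) * q))).ncard * (B * B⁻¹).ncard := by
    intro M hM
    refine ncard_le_logb_coverFam h1B hB hM (hM.mul (hpf _)) ?_ ⟨a, hAB haA, hane⟩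
    refine Set.mul_subset_mul_left (hKsub.trans_eq ?_)
    congr 1
    ring
  have hLpos : ∀ M : Set Γ, M.Finite → M.Nonempty →
      0 < Real.logb 2 (coverFam B (M * A ^ ((q + 1) * q))).ncard := by
    intro M hM hMn
    have h0 : 0 < (M.ncard : ℝ) := by exact_mod_cast (Set.ncard_pos hM).2 hMn
    exact pos_of_mul_pos_left (h0.trans_le (hlow M hM)) hKpos.le
  simp only [hLA, phiA_iterate]
  constructor
  · rintro ⟨F, hF, hlim⟩
    refine ⟨F, hF, ?_⟩
    set T := A ^ ((q + 6) * q + q * q) with hT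
    set κ : ℝ := ((B * B⁻¹).ncard : ℝ) with hκ
    have hδ : Tendsto (fun n => (((F n * T) \ F n).ncard : ℝ) / (F n).ncard) atTop (nhds 0) := by
      have hs := tendsto_finsetSum (hpf ((q + 6) * q + q * q)).toFinset
        (fun g _ => hlim g)
      rw [Finset.sum_const_zero] at hs
      refine squeeze_zero (fun n => by positivity) (fun n => ?_) hs
      rw [← Finset.sum_div]
      gcongr
      exact_mod_cast ncard_mul_diff_le_sum (hF n).1 (hpf _)
    have hδ' := hδ.const_mul ((κ + 1) * κ)
    rw [mul_zero] at hδ'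
    rw [tendsto_iff_norm_sub_tendsto_zero]
    refine squeeze_zero (fun n => norm_nonneg _) (fun n => ?_) hδ'
    obtain ⟨hFf, hFn⟩ := hF n
    set W := F n * A ^ ((q + 1) * q) with hW
    set W' := F n * A ^ ((q + 5) * q) with hW'
    have hW'f : W'.Finite := hFf.mul (hpf _)
    have hWW : W ⊆ W' := Set.mul_subset_mul_left (hmono (by gcongr; norm_num))
    have hFW : F n ⊆ W := Set.subset_mul_left _ (by simpa using hmono (Nat.zero_le _))
    have hfinT : ((F n * T) \ F n).Finite := (hFf.mul (hpf _)).subset Set.sdiff_subset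
    have b1 := logb_coverFam_le_of_subset h1B hB hW'f hWW
    have b2 := logb_coverFam_le_of_superset h1B hB hW'f hWW
    have c1 : (W' \ W).ncard ≤ ((F n * T) \ F n).ncard :=
      Set.ncard_le_ncard (Set.sdiff_subset_sdiff
        (Set.mul_subset_mul_left (hmono (by nlinarith))) hFW) hfinT
    have c2 : ((W * (B * B⁻¹)) \ W).ncard ≤ ((F n * T) \ F n).ncard := by
      refine Set.ncard_le_ncard (Set.sdiff_subset_sdiff ?_ hFW) hfinT
      rw [hW, mul_assoc]
      refine Set.mul_subset_mul_left ((Set.mul_subset_mul_left hKsub).trans ?_)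
      rw [← pow_add]
      exact hmono (by nlinarith)
    have c3 : ((W' * B) \ W).ncard ≤ ((F n * T) \ F n).ncard := by
      refine Set.ncard_le_ncard (Set.sdiff_subset_sdiff ?_ hFW) hfinT
      rw [hW', mul_assoc, hBdef, ← pow_add]
      exact Set.mul_subset_mul_left (hmono (by nlinarith))
    have c1' : ((W' \ W).ncard : ℝ) ≤ ((F n * T) \ F n).ncard := by exact_mod_cast c1
    have c2' : (((W * (B * B⁻¹)) \ W).ncard : ℝ) ≤ ((F n * T) \ F n).ncard := by exact_mod_cast c2
    have c3' : (((W' * B) \ W).ncard : ℝ) ≤ ((F n * T) \ F n).ncard := by exact_mod_cast c3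
    have hL := hLpos (F n) hFf hFn
    have hl := hlow (F n) hFf
    rw [← hW] at hL hl
    rw [← hκ] at b2
    have hF0 : 0 < ((F n).ncard : ℝ) := by exact_mod_cast (Set.ncard_pos hFf).2 hFn
    generalize Real.logb 2 (coverFam B W).ncard = L at *
    generalize Real.logb 2 (coverFam B W').ncard = L' at *
    generalize (((F n * T) \ F n).ncard : ℝ) = δ at *
    generalize ((F n).ncard : ℝ) = f at *
    have hδ0 : 0 ≤ δ := le_trans (by positivity) c1'
    have hm := mul_le_mul_of_nonneg_right c2' hKpos.le
    have habs : |L' - L| ≤ (κ + 1) * δ := by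
      rw [abs_le]
      constructor <;> nlinarith
    rw [div_sub_one hL.ne', Real.norm_eq_abs, abs_div, abs_of_pos hL, div_le_iff₀ hL]
    calc |L' - L| ≤ (κ + 1) * δ := habs
      _ = (κ + 1) * (δ / f) * f := by field_simp
      _ ≤ (κ + 1) * (δ / f) * (L * κ) := by gcongr
      _ = _ := by ring
  · rintro ⟨M, hM, hlim⟩
    let F : ℕ → Set Γ := fun n => M n * A ^ ((q + 1) * q) * B * A
    have hF : ∀ n, (F n).Finite ∧ (F n).Nonempty := fun n =>
      ⟨(((hM n).1.mul (hpf _)).mul hB).mul hfin,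
        (((hM n).2.mul ⟨1, by simpa using hmono (Nat.zero_le _)⟩).mul ⟨1, h1B⟩).mul ⟨1, hone⟩⟩
    refine ⟨F, isRightFolnerSeq_of_mul hfin hgen hF ?_⟩
    have hlim' := (hlim.sub_const 1).mul_const ((B * B⁻¹).ncard : ℝ)
    rw [sub_self, zero_mul] at hlim'
    refine squeeze_zero (fun n => by positivity) (fun n => ?_) hlim'
    obtain ⟨hMf, hMn⟩ := hM n
    have hWf : (M n * A ^ ((q + 1) * q)).Finite := hMf.mul (hpf _)
    have hs := shell_le hone hAB hq hB hWf ⟨a, haA, hane⟩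
    have hWeq : M n * A ^ ((q + 1) * q) * B * B * B * B = M n * A ^ ((q + 5) * q) := by
      simp only [hBdef, mul_assoc, ← pow_add]
      congr 2
      ring
    rw [hWeq] at hs
    have hL := hLpos _ hMf hMn
    have hup : Real.logb 2 (coverFam B (M n * A ^ ((q + 1) * q))).ncard ≤ (F n).ncard := by
      refine (logb_coverFam_le h1B hB hWf).trans ?_
      exact_mod_cast Set.ncard_le_ncard (Set.subset_mul_left _ hone) (hF n).1
    have hs' : (((F n * A) \ F n).ncard : ℝ) ≤ _ := hs
    calc (((F n * A) \ F n).ncard : ℝ) / (F n).ncard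
        ≤ (((F n * A) \ F n).ncard : ℝ) /
            Real.logb 2 (coverFam B (M n * A ^ ((q + 1) * q))).ncard := by gcongr
      _ ≤ _ := by
        rw [div_sub_one hL.ne', div_mul_eq_mul_div]
        gcongr
end

section
/- Let (Γ₁,A₁) and (Γ₂,A₂) be finitely generated groups such that φ_{A₁} : 𝒫(Γ₁) → 𝒫(Γ₁) and φ_{A₂} : 𝒫(Γ₂) → 𝒫(Γ₂) are topologically conjugate. If Γ₁ is amenable, then Γ₂ is amenable. -/
/-!
The proof compares cardinalities of fibres of iterates of `φ_A`. The `m`-fold iterate is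
`W ↦ W A ^ m`, and its fibre over `Y` is `fib A m Y`; a conjugacy carries fibres bijectively to
fibres (`fib_conj`).

*Many points in a fibre.* If `E ⊆ C A` is a suitable maximal independent set for the Cayley graph
of `A`, then any part of `E` can be removed from `C A²` without changing `C A² · A`
(`exists_removable`). Since `E` has at least `|C| / (2|A|)` points, the fibre of the `m`-th iterate
over `C A ^ (m + 2)` has at least `2 ^ (|C| / (2|A|))` points, and `C` is finite as soon as this
fibre is finite (`fib_lower`).

*Few points in a fibre.* A set in the fibre of the `m`-th iterate over `Y` is contained in
`X = {g | g A ^ m ⊆ Y}`, so the fibre has at most `2 ^ |X|` points (`fib_upper`).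

Take `m = j + 3` and `C₁` a Følner set in `Γ₁` with `|C₁ A₁ ^ (m + 2)| ≤ 2 |C₁|`. The fibres of
`φ` and of its `m`-th iterate over `Y₁ = C₁ A₁ ^ (m + 2)` then have logarithms comparable up to a
constant independent of `m`. In `Γ₂`, over `Y₂ = Φ Y₁`, the fibre of the `m`-th iterate has at
most `2 ^ |X|` points, while that of `φ` has at least `2 ^ (|X A₂ ^ j| / (2|A₂|))`, since
`Y₂ = X A₂ ^ j · A₂³`. Hence `|X A₂ ^ j| ≤ L |X|` with `L` independent of `j`. Letting `j → ∞`,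
some `X A₂ ^ i` is almost invariant under `A₂` (`exists_folner_of_bounded`), and as `A₂` generates
`Γ₂` such sets form a Følner sequence (`amenable_of_folner`).
-/

open Filter Set
open scoped Pointwise

/-- The product (cylinder) topology on `𝒫(V) ≅ {0,1}^V`. -/
noncomputable def cylTop (V : Type*) : TopologicalSpace (Set V) :=
  TopologicalSpace.induced
    (fun (S : Set V) (v : V) => @decide (v ∈ S) (Classical.propDecidable _))
    inferInstance

/-- Topological conjugacy of two self-maps with respect to given topologies. -/
def TopConj {X Y : Type*} (tX : TopologicalSpace X) (tY : TopologicalSpace Y)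
    (f : X → X) (g : Y → Y) : Prop :=
  ∃ Φ : X ≃ Y, @Continuous _ _ tX tY Φ ∧ @Continuous _ _ tY tX Φ.symm ∧
    ∀ x : X, Φ (f x) = g (Φ x)

/-- The fibre over `Y` of the `m`-th iterate of `φ_A`. -/
def fib {Γ : Type*} [Group Γ] (A : Set Γ) (m : ℕ) (Y : Set Γ) : Set (Set Γ) :=
  {W | W * A ^ m = Y}

lemma phiA_iterate_s14 {Γ : Type*} [Group Γ] (A : Set Γ) (m : ℕ) (W : Set Γ) :
    (phiA A)^[m] W = W * A ^ m := by
  induction m generalizing W with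
  | zero => simp
  | succ k ih => rw [Function.iterate_succ_apply, ih, phiA, mul_assoc, pow_succ']

lemma finite_pow {Γ : Type*} [Group Γ] {A : Set Γ} (hA : A.Finite) (m : ℕ) :
    (A ^ m).Finite := by
  induction m with
  | zero => simp
  | succ k ih => rw [pow_succ]; exact ih.mul hA

/-! ### Fibre cardinalities -/

/-- `E` is a maximal independent subset of `S` in the Cayley graph of `A`. By maximality each point
of `S` is in `E` or adjacent to it; for finite `A` this makes `E` a positive proportion of `S`. -/
lemma exists_indep {Γ : Type*} [Group Γ] (A : Set Γ) (S : Set Γ) :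
    ∃ E ⊆ S, (∀ e ∈ E, ∀ f ∈ E, f ∈ e • A → f = e) ∧ S ⊆ E * (A ∪ A⁻¹ ∪ {1}) := by
  obtain ⟨E, hE⟩ := zorn_subset {E : Set Γ | E ⊆ S ∧ ∀ e ∈ E, ∀ f ∈ E, f ∈ e • A → f = e} (by
    intro c hc hch
    refine ⟨⋃₀ c, ⟨sUnion_subset fun s hs => (hc hs).1, ?_⟩, fun s hs => subset_sUnion_of_mem hs⟩
    rintro e ⟨s, hs, hes⟩ f ⟨t, ht, hft⟩ hf
    rcases hch.total hs ht with h | h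
    · exact (hc ht).2 e (h hes) f hft hf
    · exact (hc hs).2 e hes f (h hft) hf)
  refine ⟨E, hE.prop.1, hE.prop.2, fun s hs => ?_⟩
  by_contra hcon
  have key : ∀ e ∈ E, s ∉ e • A ∧ e ∉ s • A ∧ s ≠ e := by
    intro e he
    refine ⟨?_, ?_, ?_⟩
    · rintro ⟨a, ha, rfl⟩
      exact hcon (mul_mem_mul he (Or.inl (Or.inl ha)))
    · rintro ⟨a, ha, rfl⟩
      apply hcon
      have := mul_mem_mul he (show a⁻¹ ∈ A ∪ A⁻¹ ∪ {1} from Or.inl (Or.inr (by simpa using ha)))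
      simpa using this
    · rintro rfl
      apply hcon
      simpa using mul_mem_mul he (show (1 : Γ) ∈ A ∪ A⁻¹ ∪ {1} from Or.inr rfl)
  have hins : insert s E ∈ {E : Set Γ | E ⊆ S ∧ ∀ e ∈ E, ∀ f ∈ E, f ∈ e • A → f = e} := by
    refine ⟨insert_subset hs hE.prop.1, ?_⟩
    rintro e (rfl | he) f (rfl | hf) h
    · rfl
    · exact absurd h (key f hf).2.1
    · exact absurd h (key e he).1
    · exact hE.prop.2 e he f hf h
  have : s ∈ E := hE.le_of_ge hins (subset_insert s E) (mem_insert s E)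
  exact (key s this).2.2 rfl

/-- Every subset of `E` can be removed from `C A²` without changing its product with `A`, and `E` is
a positive proportion of `C`. -/
lemma exists_removable {Γ : Type*} [Group Γ] {A : Set Γ} (hA : A.Finite) (h1 : (1 : Γ) ∈ A)
    {a₀ : Γ} (ha₀ : a₀ ∈ A) (hne : a₀ ≠ 1) (C : Set Γ) :
    ∃ E ⊆ C * A * A, (E.Finite → C.Finite ∧ C.ncard ≤ (A ∪ A⁻¹ ∪ {1}).ncard * E.ncard) ∧
      ∀ E' ⊆ E, ((C * A * A) \ E') * A = C * A * A * A := by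
  -- `E` is chosen inside `C a₀`, so that each of its points `c * a₀` is still covered by `c`.
  obtain ⟨E, hES, hind, hcov⟩ := exists_indep A ((· * a₀) '' C)
  have hT : (A ∪ A⁻¹ ∪ {1}).Finite := (hA.union hA.inv).union (finite_singleton 1)
  have hCA : ∀ c ∈ C, c ∈ C * A := fun c hc => by simpa using mul_mem_mul hc h1
  have hCAA : ∀ c ∈ C * A, c ∈ C * A * A := fun c hc => by simpa using mul_mem_mul hc h1
  have hEC : ∀ e ∈ E, e ∈ C * A := by
    intro e he
    obtain ⟨c, hc, rfl⟩ := hES he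
    exact mul_mem_mul hc ha₀
  refine ⟨E, fun e he => hCAA e (hEC e he), ?_, ?_⟩
  · intro hEf
    have hfin := hEf.mul hT
    have hinj : Function.Injective (· * a₀) := mul_left_injective a₀
    refine ⟨(hfin.subset hcov).of_finite_image hinj.injOn, ?_⟩
    rw [← ncard_image_of_injective C hinj]
    refine (ncard_le_ncard hcov hfin).trans ?_
    rw [mul_comm]
    simpa [Nat.card_coe_set_eq] using Set.natCard_mul_le (s := E) (t := A ∪ A⁻¹ ∪ {1})
  · intro E' hE'
    refine subset_antisymm (mul_subset_mul_right sdiff_subset) ?_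
    rintro _ ⟨b, hb, a, ha, rfl⟩
    by_cases hbE : b ∈ E'
    · by_cases ha1 : a = 1
      · subst ha1
        obtain ⟨c, hc, rfl⟩ := hES (hE' hbE)
        have hcE : c ∉ E' := fun h => hne <| by
          have := hind c (hE' h) (c * a₀) (hE' hbE) ⟨a₀, ha₀, rfl⟩
          simpa using this
        simpa using mul_mem_mul (show c ∈ (C * A * A) \ E' from ⟨hCAA c (hCA c hc), hcE⟩) ha₀
      · have hy : b * a ∉ E' := fun h => ha1 <| by
          have := hind b (hE' hbE) (b * a) (hE' h) ⟨a, ha, rfl⟩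
          simpa using this
        have : b * a ∈ (C * A * A) \ E' := ⟨mul_mem_mul (hEC b (hE' hbE)) ha, hy⟩
        simpa using mul_mem_mul this h1
    · exact mul_mem_mul ⟨hb, hbE⟩ ha

lemma fib_lower {Γ : Type*} [Group Γ] {A : Set Γ} (hA : A.Finite) (h1 : (1 : Γ) ∈ A)
    {a₀ : Γ} (ha₀ : a₀ ∈ A) (hne : a₀ ≠ 1) (C : Set Γ) (k : ℕ)
    (hf : (fib A (k + 1) (C * A ^ (k + 3))).Finite) :
    C.Finite ∧ ∃ e : ℕ, C.ncard ≤ (A ∪ A⁻¹ ∪ {1}).ncard * e ∧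
      2 ^ e ≤ (fib A (k + 1) (C * A ^ (k + 3))).ncard := by
  obtain ⟨E, hE, hcard, hrem⟩ := exists_removable hA h1 ha₀ hne C
  have hmaps : ∀ E' ∈ 𝒫 E, (C * A * A) \ E' ∈ fib A (k + 1) (C * A ^ (k + 3)) := by
    intro E' hE'
    show ((C * A * A) \ E') * A ^ (k + 1) = _
    rw [pow_succ', ← mul_assoc, hrem E' hE', show k + 3 = 1 + 1 + 1 + k by ring]
    simp only [pow_add, pow_one, mul_assoc]
  have hinj : InjOn (fun E' => (C * A * A) \ E') (𝒫 E) := by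
    intro s hs t ht hst
    have hs' : s ⊆ C * A * A := subset_trans hs hE
    have ht' : t ⊆ C * A * A := subset_trans ht hE
    have := congrArg (fun Z => (C * A * A) \ Z) hst
    simpa [inter_eq_self_of_subset_right hs', inter_eq_self_of_subset_right ht'] using this
  have hPf : (𝒫 E).Finite := Finite.of_injOn hmaps hinj hf
  have hEf : E.Finite := (hPf.preimage singleton_injective.injOn).subset fun x hx =>
    singleton_subset_iff.mpr hx
  obtain ⟨hC, hle⟩ := hcard hEf
  refine ⟨hC, E.ncard, hle, ?_⟩
  rw [← ncard_powerset E hEf]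
  exact ncard_le_ncard_of_injOn _ hmaps hinj hf

lemma fib_upper {Γ : Type*} [Group Γ] (A : Set Γ) (m : ℕ) (Y X : Set Γ) (hX : X.Finite)
    (hXY : ∀ g, g • A ^ m ⊆ Y → g ∈ X) :
    (fib A m Y).Finite ∧ (fib A m Y).ncard ≤ 2 ^ X.ncard := by
  have hsub : fib A m Y ⊆ 𝒫 X := by
    intro W hW g hg
    apply hXY
    rw [← show W * A ^ m = Y from hW]
    rintro _ ⟨a, ha, rfl⟩
    exact mul_mem_mul hg ha
  have hP : (𝒫 X).Finite := hX.powerset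
  exact ⟨hP.subset hsub, (ncard_le_ncard hsub hP).trans_eq (ncard_powerset X hX)⟩

/-! ### Følner sets -/

lemma exists_small_mul {Γ : Type*} [Group Γ] (ham : AmenableGroup Γ) (S : Set Γ) (hS : S.Finite) :
    ∃ F : Set Γ, F.Finite ∧ F.Nonempty ∧ (F * S).ncard ≤ 2 * F.ncard := by
  obtain ⟨F, hF, hlim⟩ := ham
  have hsum : Tendsto (fun n => ∑ g ∈ hS.toFinset,
      ((((· * g) '' F n) \ F n).ncard : ℝ) / ((F n).ncard : ℝ)) atTop (nhds 0) := by
    simpa using tendsto_finsetSum hS.toFinset (fun g _ => hlim g)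
  obtain ⟨n, hn⟩ := (hsum.eventually_lt_const one_pos).exists
  refine ⟨F n, (hF n).1, (hF n).2, ?_⟩
  have hpos : (0 : ℝ) < (F n).ncard := by
    exact_mod_cast (ncard_pos (hF n).1).mpr (hF n).2
  rw [← Finset.sum_div, div_lt_one hpos] at hn
  have hn' : ∑ g ∈ hS.toFinset, (((· * g) '' F n) \ F n).ncard < (F n).ncard := by
    exact_mod_cast hn
  have hfin : ∀ g, (((· * g) '' F n) \ F n).Finite := fun g => ((hF n).1.image _).sdiff
  have hsub : F n * S ⊆ F n ∪ ⋃ g ∈ hS.toFinset, (((· * g) '' F n) \ F n) := by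
    rintro _ ⟨f, hf, s, hs, rfl⟩
    by_cases h : f * s ∈ F n
    · exact Or.inl h
    · refine Or.inr (mem_biUnion (x := s) (by simpa using hs) ⟨⟨f, hf, rfl⟩, h⟩)
  have h1 := ncard_le_ncard hsub
    ((hF n).1.union (hS.toFinset.finite_toSet.biUnion fun g _ => hfin g))
  have h2 := ncard_union_le (F n) (⋃ g ∈ hS.toFinset, (((· * g) '' F n) \ F n))
  have h3 := Finset.set_ncard_biUnion_le hS.toFinset (fun g => (((· * g) '' F n) \ F n))
  omega

lemma exists_folner_of_bounded {Γ : Type*} [Group Γ] {A : Set Γ} (hA : A.Finite)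
    (h1 : (1 : Γ) ∈ A) (L : ℕ)
    (h : ∀ j : ℕ, ∃ X : Set Γ, X.Finite ∧ X.Nonempty ∧ (X * A ^ j).ncard ≤ L * X.ncard)
    (ε : ℝ) (hε : 0 < ε) :
    ∃ F : Set Γ, F.Finite ∧ F.Nonempty ∧ ((F * A).ncard : ℝ) ≤ (1 + ε) * F.ncard := by
  by_contra! hcon
  obtain ⟨j, hj⟩ := pow_unbounded_of_one_lt (L : ℝ) (show 1 < 1 + ε by linarith)
  obtain ⟨X, hX, hne, hle⟩ := h j
  have hfin : ∀ i, (A ^ i).Finite := fun i => finite_pow hA i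
  have hgrow : ∀ i, (1 + ε) ^ i * (X.ncard : ℝ) ≤ ((X * A ^ i).ncard : ℝ) := by
    intro i
    induction i with
    | zero => simp
    | succ i ih =>
      have := hcon (X * A ^ i) (hX.mul (hfin i)) (hne.mul ⟨1, one_mem_pow h1⟩)
      rw [pow_succ A, ← mul_assoc, pow_succ' (1 + ε), mul_assoc]
      exact (mul_le_mul_of_nonneg_left ih (by linarith)).trans this.le
  have hpos : (0 : ℝ) < X.ncard := by exact_mod_cast (ncard_pos hX).mpr hne
  have hle' : ((X * A ^ j).ncard : ℝ) ≤ L * X.ncard := by exact_mod_cast hle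
  have := (hgrow j).trans hle'
  have := le_of_mul_le_mul_right this hpos
  linarith

lemma amenable_of_folner {Γ : Type*} [Group Γ] {A : Set Γ} (hA : A.Finite)
    (h1 : (1 : Γ) ∈ A) (hgen : PosGen A)
    (h : ∀ ε : ℝ, 0 < ε →
      ∃ F : Set Γ, F.Finite ∧ F.Nonempty ∧ ((F * A).ncard : ℝ) ≤ (1 + ε) * F.ncard) :
    AmenableGroup Γ := by
  choose F hFf hFn hF using fun n : ℕ => h (1 / ((n : ℝ) + 1)) Nat.one_div_pos_of_nat
  have hpos : ∀ n, (0 : ℝ) < (F n).ncard := fun n => by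
    exact_mod_cast (ncard_pos (hFf n)).mpr (hFn n)
  refine ⟨F, fun n => ⟨hFf n, hFn n⟩, ?_⟩
  have hbase : ∀ g ∈ A, Tendsto
      (fun n => ((((· * g) '' F n) \ F n).ncard : ℝ) / ((F n).ncard : ℝ)) atTop (nhds 0) := by
    intro g hg
    refine squeeze_zero (fun n => by positivity) (fun n => ?_)
      tendsto_one_div_add_atTop_nhds_zero_nat
    rw [div_le_iff₀ (hpos n)]
    have hsub : ((· * g) '' F n) \ F n ⊆ (F n * A) \ F n := by
      apply sdiff_subset_sdiff_left
      rintro _ ⟨f, hf, rfl⟩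
      exact mul_mem_mul hf hg
    have hle := ncard_le_ncard hsub ((hFf n).mul hA).sdiff
    have heq := ncard_sdiff_add_ncard_of_subset
      (show F n ⊆ F n * A from fun f hf => by simpa using mul_mem_mul hf h1)
      ((hFf n).mul hA)
    have hle' : ((((· * g) '' F n) \ F n).ncard : ℝ) ≤ ((F n * A) \ F n).ncard := by
      exact_mod_cast hle
    have heq' : (((F n * A) \ F n).ncard : ℝ) + (F n).ncard = (F n * A).ncard := by
      exact_mod_cast heq
    have := hF n
    linarith
  have hmul : ∀ g k : Γ,
      Tendsto (fun n => ((((· * g) '' F n) \ F n).ncard : ℝ) / ((F n).ncard : ℝ))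
        atTop (nhds 0) →
      Tendsto (fun n => ((((· * k) '' F n) \ F n).ncard : ℝ) / ((F n).ncard : ℝ))
        atTop (nhds 0) →
      Tendsto (fun n => ((((· * (g * k)) '' F n) \ F n).ncard : ℝ) / ((F n).ncard : ℝ))
        atTop (nhds 0) := by
    intro g k hg hk
    have hs := hg.add hk
    rw [add_zero] at hs
    refine squeeze_zero (fun n => by positivity) (fun n => ?_) hs
    rw [← add_div]
    gcongr
    have hsub : ((· * (g * k)) '' F n) \ F n ⊆
        (· * k) '' (((· * g) '' F n) \ F n) ∪ (((· * k) '' F n) \ F n) := by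
      rintro _ ⟨⟨f, hf, rfl⟩, hn⟩
      by_cases hfg : f * g ∈ F n
      · exact Or.inr ⟨⟨f * g, hfg, mul_assoc _ _ _⟩, hn⟩
      · exact Or.inl ⟨f * g, ⟨⟨f, hf, rfl⟩, hfg⟩, mul_assoc _ _ _⟩
    have hfin : ∀ x, (((· * x) '' F n) \ F n).Finite := fun x => ((hFf n).image _).sdiff
    have h1 := ncard_le_ncard hsub (((hfin g).image _).union (hfin k))
    have h2 := ncard_union_le ((· * k) '' (((· * g) '' F n) \ F n)) (((· * k) '' F n) \ F n)
    have h3 := ncard_image_of_injective (((· * g) '' F n) \ F n) (mul_left_injective k)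
    rw [h3] at h2
    exact_mod_cast h1.trans h2
  intro g
  obtain ⟨n, -, hn⟩ := hgen g
  induction n generalizing g with
  | zero =>
    rw [pow_zero, Set.mem_one] at hn
    exact hn ▸ hbase 1 h1
  | succ n ih =>
    rw [pow_succ] at hn
    obtain ⟨x, hx, a, ha, rfl⟩ := hn
    exact hmul x a (ih x hx) (hbase a ha)

/-! ### Transfer along the conjugacy -/

lemma exists_ne_one_of_posGen {Γ : Type*} [Group Γ] [Infinite Γ] {A : Set Γ}
    (hgen : PosGen A) : ∃ a ∈ A, a ≠ 1 := by
  by_contra! hcon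
  have hA : A ⊆ 1 := fun a ha => by simpa using hcon a ha
  obtain ⟨g, hg⟩ := exists_ne (1 : Γ)
  obtain ⟨n, -, hn⟩ := hgen g
  have := pow_subset_pow_left hA (n := n) hn
  rw [one_pow] at this
  exact hg (by simpa using this)

lemma fib_conj {Γ₁ Γ₂ : Type*} [Group Γ₁] [Group Γ₂] {A₁ : Set Γ₁} {A₂ : Set Γ₂}
    (Φ : Set Γ₁ ≃ Set Γ₂) (hΦ : ∀ W, Φ (phiA A₁ W) = phiA A₂ (Φ W)) (m : ℕ) (Y : Set Γ₁) :
    fib A₂ m (Φ Y) = Φ '' fib A₁ m Y := by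
  have hit : ∀ W, Φ (W * A₁ ^ m) = Φ W * A₂ ^ m := by
    intro W
    rw [← phiA_iterate_s14, ← phiA_iterate_s14]
    exact (Function.Semiconj.iterate_right (f := Φ) hΦ m) W
  ext W
  constructor
  · intro hW
    refine ⟨Φ.symm W, ?_, by simp⟩
    apply Φ.injective
    rw [hit, Φ.apply_symm_apply]
    exact hW
  · rintro ⟨V, hV, rfl⟩
    show Φ V * A₂ ^ m = Φ Y
    rw [← hit, show V * A₁ ^ m = Y from hV]

/-- Amenability is recognizable from the dynamics: if `φ_{A₁}` and `φ_{A₂}`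
are topologically conjugate and `Γ₁` is amenable, then so is `Γ₂`. -/
theorem amenable_of_topConj {Γ₁ Γ₂ : Type*} [Group Γ₁] [Group Γ₂]
    [Countable Γ₁] [Infinite Γ₁] [Countable Γ₂] [Infinite Γ₂]
    (A₁ : Set Γ₁) (hfin₁ : A₁.Finite) (hone₁ : (1 : Γ₁) ∈ A₁)
    (hgen₁ : PosGen A₁)
    (A₂ : Set Γ₂) (hfin₂ : A₂.Finite) (hone₂ : (1 : Γ₂) ∈ A₂)
    (hgen₂ : PosGen A₂)
    (hconj : TopConj (cylTop Γ₁) (cylTop Γ₂) (phiA A₁) (phiA A₂))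
    (ham : AmenableGroup Γ₁) :
    AmenableGroup Γ₂ := by
  obtain ⟨Φ, -, -, hΦ⟩ := hconj
  obtain ⟨a₁, ha₁, hne₁⟩ := exists_ne_one_of_posGen hgen₁
  obtain ⟨a₂, ha₂, hne₂⟩ := exists_ne_one_of_posGen hgen₂
  set K₁ := (A₁ ∪ A₁⁻¹ ∪ {1}).ncard
  set K₂ := (A₂ ∪ A₂⁻¹ ∪ {1}).ncard
  refine amenable_of_folner hfin₂ hone₂ hgen₂
    (exists_folner_of_bounded hfin₂ hone₂ (K₂ * (2 * K₁)) fun j => ?_)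
  have hpow : ∀ m, (A₁ ^ m).Finite := fun m => finite_pow hfin₁ m
  obtain ⟨C, hCf, hCn, hC⟩ := exists_small_mul ham (A₁ ^ (j + 2 + 3)) (hpow _)
  set Y := C * A₁ ^ (j + 2 + 3) with hY
  have hYf : Y.Finite := hCf.mul (hpow _)
  have hupp : ∀ m, (fib A₁ m Y).Finite ∧ (fib A₁ m Y).ncard ≤ 2 ^ Y.ncard := by
    refine fun m => fib_upper A₁ m Y Y hYf fun g hg => ?_
    exact hg ⟨1, one_mem_pow hone₁, mul_one g⟩
  obtain ⟨-, e, hCe, he⟩ := fib_lower hfin₁ hone₁ ha₁ hne₁ C (j + 2) (hupp _).1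
  have hfin' : ∀ m, (fib A₂ m (Φ Y)).Finite := fun m => by
    rw [fib_conj Φ hΦ]; exact (hupp m).1.image _
  have hcard' : ∀ m, (fib A₂ m (Φ Y)).ncard = (fib A₁ m Y).ncard := fun m => by
    rw [fib_conj Φ hΦ]; exact ncard_image_of_injective _ Φ.injective
  -- `X` is the largest set whose `(j + 3)`-fold image is contained in `Φ Y`.
  set X : Set Γ₂ := {g | g • A₂ ^ (j + 2 + 1) ⊆ Φ Y} with hXdef
  have hXY : X * A₂ ^ j * A₂ ^ (0 + 3) = Φ Y := by
    rw [mul_assoc, ← pow_add]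
    apply subset_antisymm
    · rintro _ ⟨x, hx, a, ha, rfl⟩
      exact hx ⟨a, ha, rfl⟩
    · have hne : (fib A₂ (j + 2 + 1) (Φ Y)).Nonempty := by
        rw [← ncard_pos (hfin' _), hcard']
        exact lt_of_lt_of_le (by positivity) he
      obtain ⟨W, hW⟩ := hne
      have hW' : W * A₂ ^ (j + 2 + 1) = Φ Y := hW
      rw [← hW']
      refine mul_subset_mul_right fun w hw => ?_
      show w • A₂ ^ (j + 2 + 1) ⊆ Φ Y
      rw [← hW']
      rintro _ ⟨a, ha, rfl⟩
      exact mul_mem_mul hw ha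
  have hlow := fib_lower hfin₂ hone₂ ha₂ hne₂ (X * A₂ ^ j) 0
  rw [hXY] at hlow
  obtain ⟨hXAf, e', hXe, he'⟩ := hlow (hfin' _)
  have hXf : X.Finite := hXAf.subset fun x hx => by
    simpa using mul_mem_mul hx (one_mem_pow hone₂ (n := j))
  have hX2 := (fib_upper A₂ (j + 2 + 1) (Φ Y) X hXf fun g hg => hg).2
  have heX : e ≤ X.ncard := by
    rw [hcard'] at hX2
    exact (Nat.pow_le_pow_iff_right (by norm_num)).mp (he.trans hX2)
  have heY : e' ≤ Y.ncard := by
    rw [hcard'] at he'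
    exact (Nat.pow_le_pow_iff_right (by norm_num)).mp (he'.trans (hupp _).2)
  have hCpos : 0 < C.ncard := (ncard_pos hCf).mpr hCn
  have hXpos : 0 < X.ncard := by
    refine lt_of_lt_of_le (Nat.pos_of_ne_zero ?_) heX
    rintro rfl
    omega
  refine ⟨X, hXf, (ncard_pos hXf).mp hXpos, hXe.trans ?_⟩
  calc K₂ * e' ≤ K₂ * (2 * (K₁ * X.ncard)) := by
        gcongr
        refine heY.trans (hC.trans ?_)
        gcongr
        exact hCe.trans (by gcongr)
    _ = K₂ * (2 * K₁) * X.ncard := by ring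
end
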